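/- For every integer r ≥ 2, the set of real numbers α ∈ [0,1) such that r^m·α fails to be simply normal in base r for at least one integer m ≥ 0 is a Lebesgue null set. -/

import Mathlib

open MeasureTheory Filter Finset

/-- The `j`-th digit (after the radix point) of `α` in base `r`: `⌊r^j * α⌋ mod r`. -/
noncomputable def digit (r : ℕ) (α : ℝ) (j : ℕ) : ℤ := ⌊(r : ℝ) ^ j * α⌋ % r

/-- `digitCount r b n α` counts the indices `j` with `1 ≤ j ≤ n` and `digit r α j = b`. -/
noncomputable def digitCount (r b n : ℕ) (α : ℝ) : ℕ :=
  ((Finset.Icc 1 n).filter (fun j => digit r α j = (b : ℤ))).card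

/-- `α` is simply normal in base `r`. -/
def SimplyNormal (r : ℕ) (α : ℝ) : Prop :=
  ∀ b < r, Tendsto (fun n : ℕ => (digitCount r b n α : ℝ) / n) atTop (nhds (1 / r))

/-- `α` is normal in base `r`: `r^m * α` is simply normal in base `r^n`
for all `n ≥ 1` and all `m ≥ 0`. -/
def NormalBase (r : ℕ) (α : ℝ) : Prop :=
  ∀ n : ℕ, 1 ≤ n → ∀ m : ℕ, SimplyNormal (r ^ n) ((r : ℝ) ^ m * α)

/-!
Multiplication by `n` followed by reduction mod `1` preserves Lebesgue measure on `[0, 1)`, and its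
value at `x` is independent of `⌊n * x⌋`. Since the digits of `x` in base `r` are read off its orbit
under multiplication by `r`, they are identically distributed and pairwise independent, and the
strong law of large numbers gives simple normality almost everywhere on `[0, 1)`. Simple normality
depends only on `α` mod `1`, so it holds almost everywhere on `ℝ`; and multiplication by a nonzero
constant preserves null sets of `ℝ`, which takes care of the shifts `r ^ m * α`.
-/

open ProbabilityTheory
open scoped Function Topology

theorem ae_tendsto_frequency {Ω α : Type*} {mΩ : MeasurableSpace Ω} [MeasurableSpace α]
    {μ : Measure Ω} [IsFiniteMeasure μ] {X : ℕ → Ω → α}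
    (hindep : Pairwise ((· ⟂ᵢ[μ] ·) on X))
    (hident : ∀ i, IdentDistrib (X i) (X 0) μ μ) {s : Set α} (hs : MeasurableSet s)
    [DecidablePred (· ∈ s)] :
    ∀ᵐ ω ∂μ, Tendsto (fun n : ℕ ↦ (#{i ∈ range n | X i ω ∈ s} : ℝ) / n) atTop
      (𝓝 (μ.real (X 0 ⁻¹' s))) := by
  have hone : Measurable (s.indicator (1 : α → ℝ)) := measurable_one.indicator hs
  have hX : NullMeasurableSet (X 0 ⁻¹' s) μ :=
    (hident 0).aemeasurable_fst.nullMeasurableSet_preimage hs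
  have hcomp : s.indicator (1 : α → ℝ) ∘ X 0 = (X 0 ⁻¹' s).indicator 1 := rfl
  have hmean : ∫ ω, (s.indicator (1 : α → ℝ) ∘ X 0) ω ∂μ = μ.real (X 0 ⁻¹' s) := by
    rw [hcomp, integral_indicator₀ hX]
    simp
  have hlaw := strong_law_ae_real (fun i ↦ s.indicator (1 : α → ℝ) ∘ X i)
    (hcomp ▸ (integrable_const (1 : ℝ)).indicator₀ hX)
    (fun i j hij ↦ (hindep hij).comp hone hone) (fun i ↦ (hident i).comp hone)
  rw [hmean] at hlaw
  filter_upwards [hlaw] with ω hω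
  simpa only [Function.comp_apply, Set.indicator_apply, Pi.one_apply, sum_boole] using hω

theorem identDistrib_comp_of_measurePreserving {Ω Ω' α : Type*} {mΩ : MeasurableSpace Ω}
    {mΩ' : MeasurableSpace Ω'} [MeasurableSpace α] {μ : Measure Ω} {ν : Measure Ω'} {T : Ω → Ω'}
    (hT : MeasurePreserving T μ ν) {f : Ω' → α} (hf : AEMeasurable f ν) :
    IdentDistrib f (f ∘ T) ν μ where
  aemeasurable_fst := hf
  aemeasurable_snd := hf.comp_quasiMeasurePreserving hT.quasiMeasurePreserving
  map_eq := by
    rw [← AEMeasurable.map_map_of_aemeasurable (hT.map_eq.symm ▸ hf) hT.aemeasurable, hT.map_eq]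

theorem ae_of_ae_restrict_Ico_of_periodic {p : ℝ → Prop} {T a : ℝ} (hT : 0 < T)
    (hp : Function.Periodic p T) (h : ∀ᵐ x ∂volume.restrict (Set.Ico a (a + T)), p x) :
    ∀ᵐ x, p x := by
  rw [restrict_Ico_eq_restrict_Ioc] at h
  have hdomain := isAddFundamentalDomain_Ioc hT a
  refine hdomain.measure_zero_of_invariant {x | ¬ p x} (fun g ↦ ?_) ?_
  · ext x
    rw [Set.mem_vadd_set_iff_neg_vadd_mem]
    exact not_congr (hp.map_vadd_zmultiples (-g) x).to_iff
  · rwa [ae_iff, Measure.restrict_apply₀' measurableSet_Ioc.nullMeasurableSet] at h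

/-- Lebesgue measure on `[0, 1)`, regarded as a probability measure on `ℝ`. -/
noncomputable abbrev unitMeasure : Measure ℝ := volume.restrict (Set.Ico 0 1)

instance : IsProbabilityMeasure unitMeasure := ⟨by simp⟩

/-- The `n`-fold expanding map `x ↦ n * x mod 1`, with representatives taken in `[0, 1)`. -/
noncomputable def fractMul (n : ℕ) (x : ℝ) : ℝ := Int.fract (n * x)

theorem measurable_fractMul (n : ℕ) : Measurable (fractMul n) :=
  (measurable_const_mul _).fract

section ExpandingMap

variable (n : ℕ)

theorem floor_fractMul_fiber_inter_Ico {b : ℤ} (hb : b ∈ Finset.Ico 0 (n : ℤ)) (t : Set ℝ) :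
    {x : ℝ | ⌊n * x⌋ = b ∧ fractMul n x ∈ t} ∩ Set.Ico 0 1 =
      (fun x : ℝ ↦ n * x) ⁻¹' ((fun y ↦ y + -(b : ℝ)) ⁻¹' (t ∩ Set.Ico 0 1)) := by
  obtain ⟨hb0, hbn⟩ := Finset.mem_Ico.1 hb
  have hn : (0 : ℝ) < n := by exact_mod_cast hb0.trans_lt hbn
  have hb0' : (0 : ℝ) ≤ b := by exact_mod_cast hb0
  have hbn' : (b : ℝ) + 1 ≤ n := by exact_mod_cast hbn
  ext x
  simp only [Set.mem_inter_iff, Set.mem_ofPred_eq, Set.mem_preimage, fractMul, ← sub_eq_add_neg]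
  constructor
  · rintro ⟨⟨rfl, ht⟩, -⟩
    exact ⟨ht, Int.fract_nonneg _, Int.fract_lt_one _⟩
  · rintro ⟨ht, h0, h1⟩
    have hfloor : ⌊(n : ℝ) * x⌋ = b := Int.floor_eq_iff.2 ⟨by linarith, by linarith⟩
    refine ⟨⟨hfloor, by rwa [Int.fract, hfloor]⟩, ?_, ?_⟩
    · exact nonneg_of_mul_nonneg_right (by linarith : 0 ≤ (n : ℝ) * x) hn
    · exact lt_of_mul_lt_mul_left (by linarith : (n : ℝ) * x < n * 1) hn.le

theorem unitMeasure_floor_fractMul_fiber {b : ℤ} (hb : b ∈ Finset.Ico 0 (n : ℤ)) (t : Set ℝ) :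
    unitMeasure {x : ℝ | ⌊n * x⌋ = b ∧ fractMul n x ∈ t} = (n : ENNReal)⁻¹ * unitMeasure t := by
  have hn : (0 : ℝ) < n := by
    obtain ⟨hb0, hbn⟩ := Finset.mem_Ico.1 hb
    exact_mod_cast hb0.trans_lt hbn
  rw [Measure.restrict_apply' measurableSet_Ico, Measure.restrict_apply' measurableSet_Ico,
    floor_fractMul_fiber_inter_Ico n hb, Real.volume_preimage_mul_left hn.ne',
    measure_preimage_add_right, abs_of_pos (inv_pos.2 hn), ENNReal.ofReal_inv_of_pos hn,
    ENNReal.ofReal_natCast]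

variable [NeZero n]

theorem floor_mul_mem_Ico {x : ℝ} (hx : x ∈ Set.Ico 0 1) :
    ⌊(n : ℝ) * x⌋ ∈ Finset.Ico 0 (n : ℤ) := by
  have hn : (0 : ℝ) < n := by exact_mod_cast NeZero.pos n
  rw [Finset.mem_Ico, Int.floor_lt]
  exact ⟨Int.floor_nonneg.2 (mul_nonneg hn.le hx.1), mod_cast mul_lt_of_lt_one_right hn hx.2⟩

theorem unitMeasure_floor_inter_fractMul (s : Set ℤ) [DecidablePred (· ∈ s)] {t : Set ℝ}
    (ht : MeasurableSet t) :
    unitMeasure ((fun x : ℝ ↦ ⌊n * x⌋) ⁻¹' s ∩ fractMul n ⁻¹' t) =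
      #{b ∈ Finset.Ico 0 (n : ℤ) | b ∈ s} * (n : ENNReal)⁻¹ * unitMeasure t := by
  have hfloor : Measurable fun x : ℝ ↦ ⌊n * x⌋ := (measurable_const_mul _).floor
  have hsplit : ((fun x : ℝ ↦ ⌊n * x⌋) ⁻¹' s ∩ fractMul n ⁻¹' t : Set ℝ) =ᵐ[unitMeasure]
      ⋃ b ∈ {b ∈ Finset.Ico 0 (n : ℤ) | b ∈ s}, {x : ℝ | ⌊n * x⌋ = b ∧ fractMul n x ∈ t} := by
    refine eventuallyEq_set.2 ?_
    filter_upwards [ae_restrict_mem measurableSet_Ico] with x hx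
    simp only [Set.mem_inter_iff, Set.mem_preimage, Set.mem_iUnion, mem_filter,
      Set.mem_ofPred_eq, exists_prop]
    constructor
    · exact fun ⟨hs, ht⟩ ↦ ⟨_, ⟨floor_mul_mem_Ico n hx, hs⟩, rfl, ht⟩
    · rintro ⟨_, ⟨-, hs⟩, rfl, ht⟩
      exact ⟨hs, ht⟩
  rw [measure_congr hsplit, measure_biUnion_finset]
  · rw [sum_congr rfl fun b hb ↦ unitMeasure_floor_fractMul_fiber n (mem_filter.1 hb).1 t,
      sum_const, nsmul_eq_mul, mul_assoc]
  · exact fun a _ b _ hab ↦ Set.disjoint_left.2 fun x hxa hxb ↦ hab (hxa.1.symm.trans hxb.1)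
  · exact fun b _ ↦ (hfloor (measurableSet_singleton b)).inter (measurable_fractMul n ht)

theorem measurePreserving_fractMul : MeasurePreserving (fractMul n) unitMeasure unitMeasure := by
  refine ⟨measurable_fractMul n, Measure.ext fun t ht ↦ ?_⟩
  rw [Measure.map_apply (measurable_fractMul n) ht]
  simpa [ENNReal.mul_inv_cancel, NeZero.ne] using
    unitMeasure_floor_inter_fractMul n Set.univ ht

theorem unitMeasure_floor_preimage (s : Set ℤ) [DecidablePred (· ∈ s)] :
    unitMeasure ((fun x : ℝ ↦ ⌊n * x⌋) ⁻¹' s) =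
      #{b ∈ Finset.Ico 0 (n : ℤ) | b ∈ s} * (n : ENNReal)⁻¹ := by
  simpa using unitMeasure_floor_inter_fractMul n s MeasurableSet.univ

theorem indepFun_floor_fractMul :
    IndepFun (fun x : ℝ ↦ ⌊n * x⌋) (fractMul n) unitMeasure := by
  classical
  refine indepFun_iff_measure_inter_preimage_eq_mul.2 fun s t _ ht ↦ ?_
  rw [unitMeasure_floor_inter_fractMul n s ht, unitMeasure_floor_preimage,
    (measurePreserving_fractMul n).measure_preimage ht.nullMeasurableSet]

end ExpandingMap

section Digits

variable (r : ℕ)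

theorem measurable_digit (j : ℕ) : Measurable (digit r · j) :=
  (measurable_from_top (f := fun z : ℤ ↦ z % r)).comp (measurable_const_mul _).floor

theorem digit_one (x : ℝ) : digit r x 1 = ⌊r * x⌋ % r := by
  rw [digit, pow_one]

theorem digit_pow_mul (x : ℝ) (m j : ℕ) : digit r ((r : ℝ) ^ m * x) j = digit r x (m + j) := by
  rw [digit, digit, ← mul_assoc, ← pow_add, add_comm j]

theorem periodic_digit_succ (j : ℕ) : Function.Periodic (digit r · (j + 1)) 1 := by
  intro x
  have hshift : (r : ℝ) ^ (j + 1) * (x + 1) = r ^ (j + 1) * x + ((r * r ^ j : ℤ) : ℝ) := by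
    push_cast
    ring
  simp only [digit, hshift, Int.floor_add_intCast, Int.add_mul_emod_self_left]

theorem digit_fractMul_pow (x : ℝ) (m j : ℕ) :
    digit r (fractMul (r ^ m) x) (j + 1) = digit r x (m + j + 1) := by
  have hperiod := (periodic_digit_succ r j).sub_int_mul_eq (x := (r : ℝ) ^ m * x)
    ⌊(r : ℝ) ^ m * x⌋
  rwa [mul_one, digit_pow_mul, ← Int.fract, ← add_assoc, ← Nat.cast_pow] at hperiod

theorem digitCount_eq_card_range (b n : ℕ) (x : ℝ) :
    digitCount r b n x = #{i ∈ range n | digit r x (i + 1) = b} := by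
  rw [digitCount, card_filter, card_filter, ← Finset.Ico_add_one_right_eq_Icc,
    sum_Ico_eq_sum_range]
  simp [add_comm]

theorem periodic_simplyNormal : Function.Periodic (SimplyNormal r) 1 := by
  intro x
  simp only [SimplyNormal, digitCount_eq_card_range, fun j ↦ periodic_digit_succ r j x]

theorem unitMeasure_real_digit_one {b : ℕ} (hb : b < r) :
    unitMeasure.real ((digit r · 1) ⁻¹' {(b : ℤ)}) = 1 / r := by
  have : NeZero r := ⟨by omega⟩
  have hdigit : (digit r · 1) ⁻¹' {(b : ℤ)} = (fun x : ℝ ↦ ⌊r * x⌋) ⁻¹' {z | z % r = b} := by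
    ext x
    simp [digit_one]
  have hresidue : {z ∈ Finset.Ico 0 (r : ℤ) | z ∈ {z : ℤ | z % r = b}} = {(b : ℤ)} := by
    ext z
    simp only [mem_filter, Finset.mem_Ico, Set.mem_ofPred_eq, Finset.mem_singleton]
    constructor
    · rintro ⟨⟨h0, hr⟩, hz⟩
      rwa [Int.emod_eq_of_lt h0 hr] at hz
    · rintro rfl
      exact ⟨by omega, Int.emod_eq_of_lt (by omega) (by omega)⟩
  rw [Measure.real, hdigit, unitMeasure_floor_preimage, hresidue]
  simp

variable [NeZero r]

theorem identDistrib_digit_add (m j : ℕ) :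
    IdentDistrib (digit r · (m + j + 1)) (digit r · (j + 1)) unitMeasure unitMeasure := by
  have hident := identDistrib_comp_of_measurePreserving (measurePreserving_fractMul (r ^ m))
    (measurable_digit r (j + 1)).aemeasurable
  simpa only [Function.comp_def, digit_fractMul_pow] using hident.symm

theorem indepFun_digit_one_digit_add_two (d : ℕ) :
    IndepFun (digit r · 1) (digit r · (d + 2)) unitMeasure := by
  have hindep := (indepFun_floor_fractMul r).comp
    (measurable_from_top (f := fun z : ℤ ↦ z % r)) (measurable_digit r (d + 1))
  have hnext (x : ℝ) : digit r (fractMul r x) (d + 1) = digit r x (d + 2) := by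
    simpa only [pow_one, add_comm 1 d] using digit_fractMul_pow r x 1 d
  simpa only [Function.comp_def, ← digit_one, hnext] using hindep

theorem indepFun_digit_of_lt {i j : ℕ} (hij : i < j) :
    IndepFun (digit r · (i + 1)) (digit r · (j + 1)) unitMeasure := by
  obtain ⟨d, rfl⟩ := Nat.exists_eq_add_of_lt hij
  refine indepFun_of_identDistrib_pair (indepFun_digit_one_digit_add_two r d) ?_
  have hident := identDistrib_comp_of_measurePreserving (measurePreserving_fractMul (r ^ i))
    ((measurable_digit r 1).prodMk (measurable_digit r (d + 2))).aemeasurable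
  have hfirst (x : ℝ) : digit r (fractMul (r ^ i) x) 1 = digit r x (i + 1) :=
    digit_fractMul_pow r x i 0
  have hsecond (x : ℝ) : digit r (fractMul (r ^ i) x) (d + 2) = digit r x (i + d + 1 + 1) :=
    digit_fractMul_pow r x i (d + 1)
  simpa only [Function.comp_def, hfirst, hsecond] using hident

theorem pairwise_indepFun_digit :
    Pairwise ((· ⟂ᵢ[unitMeasure] ·) on fun i x ↦ digit r x (i + 1)) := by
  intro i j hij
  rcases hij.lt_or_gt with h | h
  · exact indepFun_digit_of_lt r h
  · exact (indepFun_digit_of_lt r h).symm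

theorem ae_unitMeasure_simplyNormal : ∀ᵐ x ∂unitMeasure, SimplyNormal r x := by
  refine ae_all_iff.2 fun b ↦ ae_all_iff.2 fun hb ↦ ?_
  have hfrequency := ae_tendsto_frequency (pairwise_indepFun_digit r)
    (fun i ↦ identDistrib_digit_add r i 0) (measurableSet_singleton (b : ℤ))
  rw [unitMeasure_real_digit_one r hb] at hfrequency
  simpa only [digitCount_eq_card_range, Set.mem_singleton_iff] using hfrequency

theorem ae_simplyNormal : ∀ᵐ x : ℝ, SimplyNormal r x := by
  refine ae_of_ae_restrict_Ico_of_periodic (a := 0) one_pos (periodic_simplyNormal r) ?_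
  rw [zero_add]
  exact ae_unitMeasure_simplyNormal r

theorem ae_simplyNormal_mul {c : ℝ} (hc : c ≠ 0) : ∀ᵐ x : ℝ, SimplyNormal r (c * x) :=
  (Measure.quasiMeasurePreserving_smul volume hc).ae (ae_simplyNormal r)

end Digits

theorem almost_all_shifts_simply_normal_general (r : ℕ) [NeZero r] :
    ∀ᵐ α : ℝ, NormalBase r α := by
  have hpow (m : ℕ) : (r : ℝ) ^ m ≠ 0 := pow_ne_zero m (Nat.cast_ne_zero.2 (NeZero.ne r))
  exact ae_all_iff.2 fun n ↦ ae_all_iff.2 fun _ ↦ ae_all_iff.2 fun m ↦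
    ae_simplyNormal_mul (r ^ n) (hpow m)

/-- The set of numbers `α` in `Set.Ico 0 1` such that `r ^ m * α` fails to be simply
normal in base `r` for at least one `m ≥ 0` is a null set. -/
theorem almost_all_shifts_simply_normal (r : ℕ) (hr : 2 ≤ r) :
    volume {α : ℝ | α ∈ Set.Ico (0 : ℝ) 1 ∧
        ∃ m : ℕ, ¬ SimplyNormal r ((r : ℝ) ^ m * α)} = 0 := by
  have : NeZero r := ⟨by omega⟩
  refine measure_mono_null ?_ (almost_all_shifts_simply_normal_general r)
  rintro α ⟨-, m, hm⟩ hα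
  exact hm (by simpa only [pow_one] using hα 1 le_rfl m)
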